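/- Let a ≤ x be real numbers, let N be a natural number, and let g : ℝ → ℝ be Lebesgue integrable on [a,x]. Then the integral of the function (t_1, …, t_{N+1}) ↦ g(t_{N+1}) over the ordered simplex S_{N+1} := {t ∈ ℝ^{N+1} : a ≤ t_{N+1} ≤ t_N ≤ … ≤ t_1 ≤ x} with respect to (N+1)-dimensional Lebesgue measure equals ∫_a^x g(t) · (x−t)ᴺ / N! dt. -/

import Mathlib

open MeasureTheory Set

/-!
Fix the last (smallest) coordinate `t` of a point of the ordered simplex over `[a, x]`: the
remaining coordinates range over the ordered simplex over `[t, x]`. Hence, by Tonelli, the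
restriction of Lebesgue measure to the simplex pushes forward under `u ↦ u (Fin.last n)` to the
measure on `[a, x]` whose density at `t` is the volume of the simplex over `[t, x]`. Comparing
total masses gives this volume by induction as `(x - t) ^ n / n!`, and the integral of
`g (u (Fin.last n))` is then a change of variables along the pushforward.
-/

/-- The ordered simplex `{u : a ≤ u (n - 1) ≤ ⋯ ≤ u 0 ≤ x}` of dimension `n` over the interval
`[a, x]`, encoded as the antitone `n`-tuples in `[a, x]`. For `n = 0` it is the one-point space
even when `[a, x]` is empty. -/
def orderedSimplex {α : Type*} [Preorder α] (n : ℕ) (a x : α) : Set (Fin n → α) :=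
  {u | Antitone u ∧ ∀ i, u i ∈ Icc a x}

section Order

variable {α : Type*} [Preorder α] {n : ℕ}

lemma antitone_snoc_iff {v : Fin n → α} {t : α} :
    Antitone (Fin.snoc v t : Fin (n + 1) → α) ↔ Antitone v ∧ ∀ i, t ≤ v i := by
  simp only [Antitone, Fin.forall_fin_succ', Fin.snoc_castSucc, Fin.snoc_last,
    Fin.castSucc_le_castSucc_iff, Fin.le_last, forall_const, le_refl, and_true,
    Fin.last_le_iff, Fin.castSucc_ne_last, IsEmpty.forall_iff, forall_and, implies_true]

lemma snoc_mem_orderedSimplex_iff {a x t : α} {v : Fin n → α} :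
    (Fin.snoc v t : Fin (n + 1) → α) ∈ orderedSimplex (n + 1) a x ↔
      t ∈ Icc a x ∧ v ∈ orderedSimplex n t x := by
  simp only [orderedSimplex, mem_ofPred_eq, antitone_snoc_iff, Fin.forall_fin_succ',
    Fin.snoc_castSucc, Fin.snoc_last, mem_Icc]
  constructor
  · rintro ⟨⟨hv, htv⟩, hvx, ht⟩
    exact ⟨ht, hv, fun i => ⟨htv i, (hvx i).2⟩⟩
  · rintro ⟨ht, hv, hvx⟩
    exact ⟨⟨hv, fun i => (hvx i).1⟩, fun i => ⟨ht.1.trans (hvx i).1, (hvx i).2⟩, ht⟩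

lemma isClosed_orderedSimplex [TopologicalSpace α] [OrderClosedTopology α] (n : ℕ) (a x : α) :
    IsClosed (orderedSimplex n a x) := by
  have hIcc : IsClosed {u : Fin n → α | ∀ i, u i ∈ Icc a x} := by
    rw [ofPred_forall]
    exact isClosed_iInter fun i => isClosed_Icc.preimage (continuous_apply i)
  exact isClosed_antitone.inter hIcc

end Order

section Measure

lemma pi_apply_eq_lintegral_insertNth {n : ℕ} {α : Fin (n + 1) → Type*}
    [∀ i, MeasurableSpace (α i)] (μ : ∀ i, Measure (α i)) [∀ i, SigmaFinite (μ i)]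
    (i : Fin (n + 1)) {s : Set (∀ i, α i)} (hs : MeasurableSet s) :
    Measure.pi μ s =
      ∫⁻ t, Measure.pi (fun j => μ (i.succAbove j)) {v | i.insertNth t v ∈ s} ∂μ i := by
  have h := (measurePreserving_piFinSuccAbove μ i).symm
  rw [← h.measure_preimage_equiv, Measure.prod_apply (h.measurable hs)]
  rfl

variable {α : Type*} [Preorder α] [TopologicalSpace α] [OrderClosedTopology α]
  [SecondCountableTopology α] [MeasurableSpace α] [BorelSpace α]

lemma map_last_pi_restrict_orderedSimplex (μ : Measure α) [SigmaFinite μ] (n : ℕ) (a x : α) :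
    ((Measure.pi fun _ => μ).restrict (orderedSimplex (n + 1) a x)).map (fun u => u (Fin.last n)) =
      (μ.restrict (Icc a x)).withDensity
        fun t => Measure.pi (fun _ => μ) (orderedSimplex n t x) := by
  ext s hs
  have hlast : Measurable fun u : Fin (n + 1) → α => u (Fin.last n) := measurable_pi_apply _
  have hsection (t : α) :
      {v | Fin.snoc v t ∈ (fun u => u (Fin.last n)) ⁻¹' s ∩ orderedSimplex (n + 1) a x} =
        {v | t ∈ s ∩ Icc a x ∧ v ∈ orderedSimplex n t x} := by
    ext v
    simp only [mem_ofPred_eq, mem_inter_iff, mem_preimage, Fin.snoc_last,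
      snoc_mem_orderedSimplex_iff, and_assoc]
  rw [Measure.map_apply hlast hs, Measure.restrict_apply (hlast hs),
    pi_apply_eq_lintegral_insertNth _ (Fin.last n)
      ((hlast hs).inter (isClosed_orderedSimplex (n + 1) a x).measurableSet),
    withDensity_apply _ hs, Measure.restrict_restrict hs,
    ← lintegral_indicator (hs.inter measurableSet_Icc)]
  refine lintegral_congr fun t => ?_
  simp only [Fin.insertNth_last', hsection]
  by_cases ht : t ∈ s ∩ Icc a x <;> simp [ht]

end Measure

lemma lintegral_Icc_sub_pow_div_factorial (n : ℕ) {a x : ℝ} (hax : a ≤ x) :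
    ∫⁻ t in Icc a x, ENNReal.ofReal ((x - t) ^ n / n.factorial) =
      ENNReal.ofReal ((x - a) ^ (n + 1) / (n + 1).factorial) := by
  have hint : IntegrableOn (fun t : ℝ => (x - t) ^ n / n.factorial) (Icc a x) :=
    (Continuous.continuousOn (by fun_prop)).integrableOn_Icc
  have hnonneg : ∀ᵐ t ∂volume.restrict (Icc a x), 0 ≤ (x - t) ^ n / n.factorial := by
    filter_upwards [ae_restrict_mem measurableSet_Icc] with t ht
    have := sub_nonneg.2 ht.2
    positivity
  rw [← ofReal_integral_eq_lintegral_ofReal hint hnonneg, integral_Icc_eq_integral_Ioc,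
    ← intervalIntegral.integral_of_le hax, intervalIntegral.integral_div,
    intervalIntegral.integral_comp_sub_left (fun t => t ^ n) x, integral_pow, sub_self,
    zero_pow n.succ_ne_zero, sub_zero, div_div, Nat.factorial_succ]
  push_cast
  rfl

lemma volume_orderedSimplex (n : ℕ) {a x : ℝ} (hax : a ≤ x) :
    volume (orderedSimplex n a x) = ENNReal.ofReal ((x - a) ^ n / n.factorial) := by
  induction n generalizing a with
  | zero =>
    have huniv : orderedSimplex 0 a x = univ :=
      eq_univ_of_forall fun u => ⟨Subsingleton.antitone u, finZeroElim⟩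
    simp [huniv, volume_pi]
  | succ n ih =>
    calc volume (orderedSimplex (n + 1) a x)
        = (volume.restrict (orderedSimplex (n + 1) a x)).map (fun u => u (Fin.last n)) univ := by
          rw [Measure.map_apply (measurable_pi_apply _) .univ, preimage_univ,
            Measure.restrict_apply_univ]
      _ = ∫⁻ t in Icc a x, volume (orderedSimplex n t x) := by
          rw [volume_pi, map_last_pi_restrict_orderedSimplex, withDensity_apply _ .univ,
            Measure.restrict_univ, volume_pi]
      _ = ∫⁻ t in Icc a x, ENNReal.ofReal ((x - t) ^ n / n.factorial) :=
          setLIntegral_congr_fun measurableSet_Icc fun t ht => ih ht.2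
      _ = _ := lintegral_Icc_sub_pow_div_factorial n hax

lemma map_last_volume_restrict_orderedSimplex (n : ℕ) (a x : ℝ) :
    (volume.restrict (orderedSimplex (n + 1) a x)).map (fun u => u (Fin.last n)) =
      (volume.restrict (Icc a x)).withDensity
        fun t => ENNReal.ofReal ((x - t) ^ n / n.factorial) := by
  rw [volume_pi, map_last_pi_restrict_orderedSimplex]
  refine withDensity_congr_ae ?_
  filter_upwards [ae_restrict_mem measurableSet_Icc] with t ht
  rw [← volume_pi, volume_orderedSimplex n ht.2]

theorem integral_orderedSimplex_general {E : Type*} [NormedAddCommGroup E] [NormedSpace ℝ E]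
    (a x : ℝ) (N : ℕ) (g : ℝ → E)
    (hg : IntegrableOn (fun t => ((x - t) ^ N / N.factorial) • g t) (Icc a x)) :
    ∫ u in orderedSimplex (N + 1) a x, g (u (Fin.last N)) =
      ∫ t in Icc a x, ((x - t) ^ N / N.factorial) • g t := by
  have hdensity : Measurable fun t : ℝ => ENNReal.ofReal ((x - t) ^ N / N.factorial) := by
    fun_prop
  have hfinite : ∀ᵐ t ∂volume.restrict (Icc a x),
      ENNReal.ofReal ((x - t) ^ N / N.factorial) < ⊤ := ae_of_all _ fun _ => ENNReal.ofReal_lt_top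
  have hsmul : EqOn (fun t => (ENNReal.ofReal ((x - t) ^ N / N.factorial)).toReal • g t)
      (fun t => ((x - t) ^ N / N.factorial) • g t) (Icc a x) := fun t ht => by
    have := sub_nonneg.2 ht.2
    simp only [ENNReal.toReal_ofReal (show 0 ≤ (x - t) ^ N / N.factorial by positivity)]
  have hmap : Integrable g
      ((volume.restrict (orderedSimplex (N + 1) a x)).map fun u => u (Fin.last N)) := by
    rw [map_last_volume_restrict_orderedSimplex,
      integrable_withDensity_iff_integrable_smul' hdensity hfinite]
    exact hg.congr_fun hsmul.symm measurableSet_Icc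
  rw [← integral_map (measurable_pi_apply _).aemeasurable hmap.aestronglyMeasurable,
    map_last_volume_restrict_orderedSimplex,
    integral_withDensity_eq_integral_toReal_smul hdensity hfinite]
  exact setIntegral_congr_fun measurableSet_Icc hsmul

/-- If `g` is Lebesgue integrable on `[a,x]`, the integral of
`(t₁, …, t_{N+1}) ↦ g(t_{N+1})` over the ordered simplex
`S_{N+1} = {u ∈ ℝ^{N+1} : a ≤ u_{N+1} ≤ u_N ≤ … ≤ u_1 ≤ x}` with respect to the
`(N+1)`-dimensional Lebesgue measure equals `∫_a^x g(t) ⬝ (x-t)ᴺ / N! dt`. -/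
theorem integral_orderedSimplex (a x : ℝ) (hax : a ≤ x) (N : ℕ) (g : ℝ → ℝ)
    (hg : IntegrableOn g (Icc a x)) :
    (∫ u in {u : Fin (N + 1) → ℝ | (∀ i j : Fin (N + 1), i ≤ j → u j ≤ u i) ∧
        ∀ i, u i ∈ Icc a x}, g (u (Fin.last N))) =
      ∫ t in Icc a x, g t * ((x - t) ^ N / (Nat.factorial N)) := by
  simp_rw [mul_comm (g _)]
  exact integral_orderedSimplex_general a x N g
    (hg.continuousOn_smul (by fun_prop) isCompact_Icc)
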